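/- arXiv:2603.21831 — 2 statements merged into one kernel-verified Lean document; each statement's English description precedes it below -/
import Mathlib

section
/- Let y₀, y₁, y₂ ∈ ℝ with y₀ > y₁ and y₁ < y₂, let ḡ : ℝ → ℝ be given by ḡ(t) = y₀ + (y₁−y₀)t for t ≤ 1 and ḡ(t) = y₁ + (y₂−y₁)(t−1) for t ≥ 1, and let φ be a nonnegative mollifier on ℝ with supp φ = [−1,1] and φ(0) > 0. Then for every ε > 0 there exists δ = δ(ε) > 0 such that, on V := (1−δ, 1+δ), the directional mollification Ĝ_ε of ḡ is convex and satisfies Ĝ_ε ≤ ḡ on V. -/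
/-!
`ḡ(s) + Dḡ(s)(t - s)` is the line carrying the segment through `s`, evaluated at `t`. Hence
`Ĝ_ε(t)` averages just two values, those at `t` of the lines through the left and the right
segment, with weights `1 - Φ(t - 1)` and `Φ(t - 1)`, where `Φ(x) = ∫ u in Iic x, φ_ε u`. Such an
average is at most the larger value, which is `ḡ(t)`. Moreover
`Ĝ_ε(t) = (affine function of t) + (y₀ - 2 y₁ + y₂) (t - 1) Φ(t - 1)`, and
`(x Φ(x))'' = 2 φ_ε(x) + x φ_ε'(x)` is positive near `x = 0` because `φ_ε(0) > 0`.
-/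

open MeasureTheory Filter Topology

noncomputable section

/-- The scaled mollifier `φ_ε(x) = ε⁻¹ φ(x/ε)` on `ℝ`. -/
def mollR (ε : ℝ) (φ : ℝ → ℝ) : ℝ → ℝ := fun x => ε⁻¹ * φ (x / ε)

/-- The extension `ḡ` of the scalar two-segment function through `y₀, y₁, y₂`. -/
def gbar (y0 y1 y2 : ℝ) : ℝ → ℝ :=
  fun t => if t ≤ 1 then y0 + (y1 - y0) * t else y1 + (y2 - y1) * (t - 1)

/-- The (almost everywhere) derivative of `ḡ`. -/
def Dgbar (y0 y1 y2 : ℝ) : ℝ → ℝ :=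
  fun t => if t ≤ 1 then y1 - y0 else y2 - y1

/-- The conventional mollification `G_ε = ḡ * φ_ε`. -/
def Gconv (ε : ℝ) (φ : ℝ → ℝ) (y0 y1 y2 : ℝ) : ℝ → ℝ :=
  fun t => ∫ s, mollR ε φ (t - s) * gbar y0 y1 y2 s

/-- The directional derivative term `D_ε(t) = ∫ Dḡ(s)·(t-s)·φ_ε(t-s) ds`. -/
def Dterm (ε : ℝ) (φ : ℝ → ℝ) (y0 y1 y2 : ℝ) : ℝ → ℝ :=
  fun t => ∫ s, Dgbar y0 y1 y2 s * ((t - s) * mollR ε φ (t - s))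

/-- The directional mollification `Ĝ_ε = G_ε + D_ε`. -/
def Ghat (ε : ℝ) (φ : ℝ → ℝ) (y0 y1 y2 : ℝ) : ℝ → ℝ :=
  fun t => Gconv ε φ y0 y1 y2 t + Dterm ε φ y0 y1 y2 t

section IntegralLemmas

variable {α : Type*} [MeasurableSpace α] {μ : Measure α} {p : α → Prop} [DecidablePred p]
  {f : α → ℝ}

lemma integrable_ite_mul (hp : MeasurableSet {x | p x}) (hf : Integrable f μ) (a b : ℝ) :
    Integrable (fun x => (if p x then a else b) * f x) μ := by
  simp only [ite_mul]
  exact Integrable.piecewise (s := {x | p x}) hp (hf.const_mul a).integrableOn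
    (hf.const_mul b).integrableOn

lemma integral_ite_mul (hp : MeasurableSet {x | p x}) (hf : Integrable f μ) (a b : ℝ) :
    ∫ x, (if p x then a else b) * f x ∂μ
      = a * ∫ x in {x | p x}, f x ∂μ + b * ∫ x in {x | p x}ᶜ, f x ∂μ := by
  simp only [ite_mul, ← integral_const_mul]
  exact integral_piecewise (s := {x | p x}) hp (hf.const_mul a).integrableOn
    (hf.const_mul b).integrableOn

variable {E : Type*} [NormedAddCommGroup E] [NormedSpace ℝ E]

lemma setIntegral_Ioi_comp_sub_left (g : ℝ → E) (a t : ℝ) :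
    ∫ s in Set.Ioi a, g (t - s) = ∫ u in Set.Iic (t - a), g u := by
  have h := (Measure.measurePreserving_sub_left volume t).setIntegral_preimage_emb
    (MeasurableEquiv.subLeft t).measurableEmbedding g (Set.Iio (t - a))
  rwa [Set.preimage_const_sub_Iio, sub_sub_cancel, ← integral_Iic_eq_integral_Iio] at h

lemma hasDerivAt_setIntegral_Iic [CompleteSpace E] {g : ℝ → E} (hg : Integrable g) {x : ℝ}
    (hx : ContinuousAt g x) : HasDerivAt (fun y => ∫ u in Set.Iic y, g u) (g x) x := by
  have split : ∀ y, ∫ u in Set.Iic y, g u = (∫ u in Set.Iic x, g u) + ∫ u in x..y, g u :=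
    fun y => by
      rw [← intervalIntegral.integral_Iic_sub_Iic hg.integrableOn hg.integrableOn, add_sub_cancel]
  rw [funext split]
  exact (intervalIntegral.integral_hasDerivAt_right hg.intervalIntegrable
    hg.aestronglyMeasurable.stronglyMeasurableAtFilter hx).const_add _

end IntegralLemmas

lemma exists_convexOn_Ioo_of_eventually_hasDerivAt {f f' f'' : ℝ → ℝ} {a : ℝ}
    (hf : ∀ᶠ x in 𝓝 a, HasDerivAt f (f' x) x) (hf' : ∀ᶠ x in 𝓝 a, HasDerivAt f' (f'' x) x)
    (hf'' : ∀ᶠ x in 𝓝 a, 0 ≤ f'' x) :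
    ∃ δ : ℝ, 0 < δ ∧ ConvexOn ℝ (Set.Ioo (a - δ) (a + δ)) f := by
  obtain ⟨δ, hδ, h⟩ := Metric.eventually_nhds_iff_ball.1 (hf.and (hf'.and hf''))
  simp only [Real.ball_eq_Ioo] at h
  refine ⟨δ, hδ, convexOn_of_hasDerivWithinAt2_nonneg (f' := f') (f'' := f'') (convex_Ioo _ _)
    (fun x hx => (h x hx).1.continuousAt.continuousWithinAt) ?_ ?_ ?_⟩ <;>
    rw [interior_Ioo]
  · exact fun x hx => (h x hx).1.hasDerivWithinAt
  · exact fun x hx => (h x hx).2.1.hasDerivWithinAt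
  · exact fun x hx => (h x hx).2.2

lemma exists_convexOn_Ioo_mul_setIntegral_Iic {ψ : ℝ → ℝ} (hψ : Integrable ψ)
    (hψ_smooth : ContDiffAt ℝ 1 ψ 0) (hψ0 : 0 < ψ 0) :
    ∃ δ : ℝ, 0 < δ ∧ ConvexOn ℝ (Set.Ioo (-δ) δ) (fun x => x * ∫ u in Set.Iic x, ψ u) := by
  have hdiff : ∀ᶠ x in 𝓝 (0 : ℝ), DifferentiableAt ℝ ψ x :=
    (hψ_smooth.eventually (by simp)).mono fun x hx => hx.differentiableAt one_ne_zero
  have hΦ : ∀ᶠ x in 𝓝 (0 : ℝ), HasDerivAt (fun y => ∫ u in Set.Iic y, ψ u) (ψ x) x :=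
    hdiff.mono fun x hx => hasDerivAt_setIntegral_Iic hψ hx.continuousAt
  have first : ∀ᶠ x in 𝓝 (0 : ℝ), HasDerivAt (fun y => y * ∫ u in Set.Iic y, ψ u)
      ((∫ u in Set.Iic x, ψ u) + x * ψ x) x :=
    hΦ.mono fun x hx => ((hasDerivAt_id x).mul hx).congr_deriv (by simp)
  have second : ∀ᶠ x in 𝓝 (0 : ℝ), HasDerivAt (fun y => (∫ u in Set.Iic y, ψ u) + y * ψ y)
      (2 * ψ x + x * deriv ψ x) x := by
    filter_upwards [hΦ, hdiff] with x hx hdx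
    exact (hx.add ((hasDerivAt_id x).mul hdx.hasDerivAt)).congr_deriv (by simp only [id]; ring)
  have continuousAt_deriv : ContinuousAt (deriv ψ) 0 := by
    simpa only [fderiv_apply_one_eq_deriv] using
      (hψ_smooth.continuousAt_fderiv one_ne_zero).clm_apply (continuousAt_const (y := (1 : ℝ)))
  have pos : ∀ᶠ x in 𝓝 (0 : ℝ), 0 < 2 * ψ x + x * deriv ψ x :=
    ((hψ_smooth.continuousAt.const_mul 2).add (continuousAt_id.mul continuousAt_deriv)).eventually
      (lt_mem_nhds (by simpa using hψ0))
  simpa only [zero_sub, zero_add] using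
    exists_convexOn_Ioo_of_eventually_hasDerivAt first second (pos.mono fun _ => le_of_lt)

lemma integrable_id_mul_of_hasCompactSupport {f : ℝ → ℝ} (hf : Continuous f)
    (hf_compact : HasCompactSupport f) : Integrable fun x => x * f x :=
  (continuous_id.mul hf).integrable_of_hasCompactSupport hf_compact.mul_left

section ScaledMollifier

variable {φ : ℝ → ℝ} {ε : ℝ}

lemma integral_mollR (hε : 0 < ε) : ∫ x, mollR ε φ x = ∫ x, φ x := by
  simp only [mollR]
  rw [integral_const_mul, Measure.integral_comp_div, abs_of_pos hε, smul_eq_mul,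
    inv_mul_cancel_left₀ hε.ne']

lemma integrable_id_mul_mollR (hε : ε ≠ 0) (hφ : Integrable fun x => x * φ x) :
    Integrable fun x => x * mollR ε φ x :=
  (hφ.comp_div hε).congr (.of_forall fun x => by simp only [mollR]; ring)

lemma contDiffAt_mollR {n : WithTop ℕ∞} (hφ : ContDiffAt ℝ n φ 0) :
    ContDiffAt ℝ n (mollR ε φ) 0 :=
  contDiffAt_const.mul <| ContDiffAt.comp 0 (by rwa [zero_div]) (contDiffAt_id.div_const ε)

end ScaledMollifier

section TwoSegments

/-- The line through `(0, y₀)` and `(1, y₁)`, which carries the left branch of `ḡ`. -/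
def leftLine (y0 y1 t : ℝ) : ℝ := y0 + (y1 - y0) * t

/-- The line through `(1, y₁)` and `(2, y₂)`, which carries the right branch of `ḡ`. -/
def rightLine (y1 y2 t : ℝ) : ℝ := y1 + (y2 - y1) * (t - 1)

variable {y0 y1 y2 : ℝ}

lemma rightLine_sub_leftLine (t : ℝ) :
    rightLine y1 y2 t - leftLine y0 y1 t = (y0 + y2 - 2 * y1) * (t - 1) := by
  simp only [rightLine, leftLine]
  ring

lemma gbar_eq_max (hy : 2 * y1 ≤ y0 + y2) (t : ℝ) :
    gbar y0 y1 y2 t = max (leftLine y0 y1 t) (rightLine y1 y2 t) := by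
  have hsub := rightLine_sub_leftLine (y0 := y0) (y1 := y1) (y2 := y2) t
  rcases le_or_gt t 1 with ht | ht
  · have : rightLine y1 y2 t ≤ leftLine y0 y1 t := by nlinarith
    rw [max_eq_left this, gbar, if_pos ht, leftLine]
  · have : leftLine y0 y1 t ≤ rightLine y1 y2 t := by nlinarith
    rw [max_eq_right this, gbar, if_neg ht.not_ge, rightLine]

lemma gbar_add_Dgbar_mul_sub (s t : ℝ) :
    gbar y0 y1 y2 s + Dgbar y0 y1 y2 s * (t - s)
      = if s ≤ 1 then leftLine y0 y1 t else rightLine y1 y2 t := by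
  simp only [gbar, Dgbar, leftLine, rightLine]
  split_ifs <;> ring

variable {φ : ℝ → ℝ} {ε : ℝ}

lemma Ghat_eq_integral (hψ : Integrable (mollR ε φ))
    (hψ_moment : Integrable fun x => x * mollR ε φ x) (t : ℝ) :
    Ghat ε φ y0 y1 y2 t
      = ∫ s, (if s ≤ 1 then leftLine y0 y1 t else rightLine y1 y2 t) * mollR ε φ (t - s) := by
  have htangent := integrable_ite_mul (measurableSet_Iic (a := (1 : ℝ))) (hψ.comp_sub_left t)
    (leftLine y0 y1 t) (rightLine y1 y2 t)
  have hD : Integrable fun s => Dgbar y0 y1 y2 s * ((t - s) * mollR ε φ (t - s)) :=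
    integrable_ite_mul measurableSet_Iic (hψ_moment.comp_sub_left t) _ _
  have key : ∀ s, (if s ≤ 1 then leftLine y0 y1 t else rightLine y1 y2 t) * mollR ε φ (t - s)
      = mollR ε φ (t - s) * gbar y0 y1 y2 s
        + Dgbar y0 y1 y2 s * ((t - s) * mollR ε φ (t - s)) := fun s => by
    rw [← gbar_add_Dgbar_mul_sub]
    ring
  have hG : Integrable fun s => mollR ε φ (t - s) * gbar y0 y1 y2 s :=
    (htangent.sub hD).congr (.of_forall fun s => sub_eq_of_eq_add (key s))
  rw [funext key, integral_add hG hD]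
  rfl

lemma Ghat_eq_combo (hψ_int : ∫ x, mollR ε φ x = 1)
    (hψ_moment : Integrable fun x => x * mollR ε φ x) (t : ℝ) :
    Ghat ε φ y0 y1 y2 t = (1 - ∫ u in Set.Iic (t - 1), mollR ε φ u) * leftLine y0 y1 t
      + (∫ u in Set.Iic (t - 1), mollR ε φ u) * rightLine y1 y2 t := by
  have hψ : Integrable (mollR ε φ) := integrable_of_integral_eq_one hψ_int
  have hright : ∫ s in (Set.Iic 1)ᶜ, mollR ε φ (t - s) = ∫ u in Set.Iic (t - 1), mollR ε φ u := by
    rw [Set.compl_Iic, setIntegral_Ioi_comp_sub_left]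
  have hleft : ∫ s in Set.Iic 1, mollR ε φ (t - s) = 1 - ∫ u in Set.Iic (t - 1), mollR ε φ u := by
    rw [← hright, eq_sub_iff_add_eq, integral_add_compl measurableSet_Iic (hψ.comp_sub_left t),
      integral_sub_left_eq_self _ volume t, hψ_int]
  rw [Ghat_eq_integral hψ hψ_moment, integral_ite_mul measurableSet_Iic (hψ.comp_sub_left t)]
  rw [Set.Iic_def, hleft, hright, mul_comm, mul_comm (rightLine y1 y2 t)]

lemma Ghat_le_gbar (hy : 2 * y1 ≤ y0 + y2) (hψ_int : ∫ x, mollR ε φ x = 1)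
    (hψ_moment : Integrable fun x => x * mollR ε φ x) (hψ_nonneg : 0 ≤ mollR ε φ) (t : ℝ) :
    Ghat ε φ y0 y1 y2 t ≤ gbar y0 y1 y2 t := by
  have mass_nonneg : 0 ≤ ∫ u in Set.Iic (t - 1), mollR ε φ u := integral_nonneg hψ_nonneg
  have mass_le_one : ∫ u in Set.Iic (t - 1), mollR ε φ u ≤ 1 :=
    (setIntegral_le_integral (integrable_of_integral_eq_one hψ_int)
      (.of_forall hψ_nonneg)).trans_eq hψ_int
  rw [Ghat_eq_combo hψ_int hψ_moment, gbar_eq_max hy]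
  exact Convex.combo_le_max _ _ (sub_nonneg.2 mass_le_one) mass_nonneg (sub_add_cancel _ _)

lemma exists_convexOn_Ioo_Ghat (hy : 2 * y1 ≤ y0 + y2) (hψ_int : ∫ x, mollR ε φ x = 1)
    (hψ_moment : Integrable fun x => x * mollR ε φ x) (hψ_smooth : ContDiffAt ℝ 1 (mollR ε φ) 0)
    (hψ0 : 0 < mollR ε φ 0) :
    ∃ δ : ℝ, 0 < δ ∧ ConvexOn ℝ (Set.Ioo (1 - δ) (1 + δ)) (Ghat ε φ y0 y1 y2) := by
  obtain ⟨δ, hδ, hconv⟩ := exists_convexOn_Ioo_mul_setIntegral_Iic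
    (integrable_of_integral_eq_one hψ_int) hψ_smooth hψ0
  have hshift : ConvexOn ℝ (Set.Ioo (1 - δ) (1 + δ))
      (fun t => (t - 1) * ∫ u in Set.Iic (t - 1), mollR ε φ u) := by
    simpa only [Set.preimage_sub_const_Ioo, neg_add_eq_sub, add_comm δ,
      Function.comp_def, ← sub_eq_add_neg] using hconv.translate_left (-1)
  have hline : ConvexOn ℝ (Set.Ioo (1 - δ) (1 + δ)) (leftLine y0 y1) :=
    (((LinearMap.mulLeft ℝ (y1 - y0)).convexOn (convex_Ioo _ _)).add_const y0).congr
      fun t _ => add_comm _ _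
  refine ⟨δ, hδ, (hline.add (hshift.smul (sub_nonneg.2 hy))).congr fun t _ => ?_⟩
  have hsub := rightLine_sub_leftLine (y0 := y0) (y1 := y1) (y2 := y2) t
  rw [Ghat_eq_combo hψ_int hψ_moment, Pi.add_apply, smul_eq_mul]
  linear_combination -(∫ u in Set.Iic (t - 1), mollR ε φ u) * hsub

end TwoSegments

theorem stmt9_general (y0 y1 y2 : ℝ) (hy : 2 * y1 ≤ y0 + y2) (φ : ℝ → ℝ)
    (hφ_smooth : ContDiffAt ℝ 1 φ 0) (hφ_int : ∫ x, φ x = 1)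
    (hφ_moment : Integrable fun x => x * φ x) (hφ_nonneg : ∀ x, 0 ≤ φ x) (hφ0 : 0 < φ 0)
    (ε : ℝ) (hε : 0 < ε) :
    ∃ δ : ℝ, 0 < δ ∧
      ConvexOn ℝ (Set.Ioo (1 - δ) (1 + δ)) (Ghat ε φ y0 y1 y2)
      ∧ ∀ t, Ghat ε φ y0 y1 y2 t ≤ gbar y0 y1 y2 t := by
  have hψ_int : ∫ x, mollR ε φ x = 1 := (integral_mollR hε).trans hφ_int
  have hψ_moment := integrable_id_mul_mollR hε.ne' hφ_moment
  have hψ_nonneg : 0 ≤ mollR ε φ := fun x => mul_nonneg (inv_nonneg.2 hε.le) (hφ_nonneg _)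
  have hψ0 : 0 < mollR ε φ 0 := mul_pos (inv_pos.2 hε) (by rwa [zero_div])
  obtain ⟨δ, hδ, hconv⟩ :=
    exists_convexOn_Ioo_Ghat hy hψ_int hψ_moment (contDiffAt_mollR hφ_smooth) hψ0
  exact ⟨δ, hδ, hconv, Ghat_le_gbar hy hψ_int hψ_moment hψ_nonneg⟩

theorem stmt9 (y0 y1 y2 : ℝ) (hy0 : y1 < y0) (hy2 : y1 < y2)
    -- `φ` is a nonnegative mollifier on `ℝ` with support `[-1,1]` and `φ(0) > 0`
    (φ : ℝ → ℝ) (hφ_smooth : ContDiff ℝ (⊤ : ℕ∞) φ)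
    (hφ_int : ∫ x, φ x = 1) (hφ_nonneg : ∀ x, 0 ≤ φ x)
    (hφ_supp : tsupport φ = Set.Icc (-1 : ℝ) 1) (hφ0 : 0 < φ 0)
    (ε : ℝ) (hε : 0 < ε) :
    -- there is `δ > 0` such that on `V = (1-δ, 1+δ)` the directional
    -- mollification `Ĝ_ε` is convex and lies below `ḡ`
    ∃ δ : ℝ, 0 < δ ∧
      ConvexOn ℝ (Set.Ioo (1 - δ) (1 + δ)) (Ghat ε φ y0 y1 y2)
      ∧ ∀ t ∈ Set.Ioo (1 - δ) (1 + δ), Ghat ε φ y0 y1 y2 t ≤ gbar y0 y1 y2 t := by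
  have hφ_compact : HasCompactSupport φ := by simp only [HasCompactSupport, hφ_supp, isCompact_Icc]
  obtain ⟨δ, hδ, hconv, hle⟩ := stmt9_general y0 y1 y2 (by linarith) φ
    (hφ_smooth.of_le (by norm_cast)).contDiffAt hφ_int
    (integrable_id_mul_of_hasCompactSupport hφ_smooth.continuous hφ_compact) hφ_nonneg hφ0 ε hε
  exact ⟨δ, hδ, hconv, fun t _ => hle t⟩
end
end

section
/- Let f : ℝ → ℝ^n be Lipschitz and differentiable almost everywhere with locally integrable derivative Df, let φ be a nonnegative mollifier on ℝ with supp φ = [−1,1], and for γ ∈ ℝ and ε > 0 define G_ε^γ := γ·F̂_ε + (1−γ)·F_ε = F_ε + γ·D_ε. Then for every γ ∈ ℝ and ε > 0, G_ε^γ ∈ C^∞(ℝ, ℝ^n), and as ε → 0⁺, G_ε^γ → f pointwise and uniformly on compact subsets of ℝ. -/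
open MeasureTheory Filter Topology

noncomputable section

abbrev Euc (n : ℕ) := EuclideanSpace ℝ (Fin n)

/-- The combined mollification `G_ε^γ = F_ε + γ·D_ε` of a curve `f` with
almost-everywhere derivative `Df`. -/
def Gcomb {n : ℕ} (ε γ : ℝ) (φ : ℝ → ℝ) (f Df : ℝ → Euc n) : ℝ → Euc n :=
  fun t => (∫ s, mollR ε φ (t - s) • f s)
    + γ • (∫ s, ((t - s) * mollR ε φ (t - s)) • Df s)

/-!
Substituting `u = (t - s) / ε` turns `F_ε(t)` into `∫ u, φ u • f (t - ε u)`, which is jointly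
continuous in `(ε, t)` up to `ε = 0`, where it equals `f t`. The kernel of `D_ε` is `ψ((t - s) / ε)`
with `ψ(x) = x φ(x)`: the factor `t - s` cancels the `ε⁻¹` of `φ_ε`. Hence `‖D_ε(t)‖` is at most a
constant times the integral of `‖Df‖` over `[t - R ε, t + R ε]`, which is again jointly continuous
in `(ε, t)` and vanishes at `ε = 0`. Joint convergence as `(ε, t) → (0⁺, t₀)` is locally uniform
convergence. Smoothness is that of a convolution with a smooth compactly supported kernel.
-/

section CombinedMollification

variable {E : Type*} [NormedAddCommGroup E] [NormedSpace ℝ E] {φ : ℝ → ℝ} {f g : ℝ → E}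

/-- The conventional mollification `F_ε = f * φ_ε`. -/
def conventionalMollification (ε : ℝ) (φ : ℝ → ℝ) (f : ℝ → E) : ℝ → E :=
  fun t => ∫ s, mollR ε φ (t - s) • f s

/-- The directional derivative term `D_ε` of a curve with derivative `g`. -/
def directionalTerm (ε : ℝ) (φ : ℝ → ℝ) (g : ℝ → E) : ℝ → E :=
  fun t => ∫ s, ((t - s) * mollR ε φ (t - s)) • g s

/-- The combined mollification `G_ε^γ = F_ε + γ D_ε` of a curve `f` with derivative `g` in a
normed space; it agrees with `Gcomb` by definition when the space is `Euc n`. -/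
def combinedMollification (ε γ : ℝ) (φ : ℝ → ℝ) (f g : ℝ → E) : ℝ → E :=
  fun t => conventionalMollification ε φ f t + γ • directionalTerm ε φ g t

lemma contDiff_mollR {m : ℕ∞} (hφ : ContDiff ℝ m φ) (ε : ℝ) : ContDiff ℝ m (mollR ε φ) :=
  contDiff_const.mul (hφ.comp (contDiff_id.div_const ε))

lemma hasCompactSupport_mollR (hφ : HasCompactSupport φ) {ε : ℝ} (hε : ε ≠ 0) :
    HasCompactSupport (mollR ε φ) := by
  have hscaled : HasCompactSupport fun x => φ (x / ε) := by
    simpa only [smul_eq_mul, div_eq_inv_mul] using hφ.comp_smul (inv_ne_zero hε)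
  exact hscaled.mul_left

lemma contDiff_integral_sub_smul {m : ℕ∞} {k : ℝ → ℝ} (hk : ContDiff ℝ m k)
    (hk_supp : HasCompactSupport k) (hg : LocallyIntegrable g) :
    ContDiff ℝ m fun t => ∫ s, k (t - s) • g s :=
  hk_supp.contDiff_convolution_right (ContinuousLinearMap.lsmul ℝ ℝ).flip hg hk

lemma contDiff_combinedMollification {m : ℕ∞} (hφ : ContDiff ℝ m φ)
    (hφ_supp : HasCompactSupport φ) (hf : LocallyIntegrable f) (hg : LocallyIntegrable g)
    {ε : ℝ} (hε : ε ≠ 0) (γ : ℝ) : ContDiff ℝ m (combinedMollification ε γ φ f g) := by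
  have hk := contDiff_mollR hφ ε
  have hk_supp := hasCompactSupport_mollR hφ_supp hε
  have hF : ContDiff ℝ m (conventionalMollification ε φ f) :=
    contDiff_integral_sub_smul hk hk_supp hf
  have hD : ContDiff ℝ m (directionalTerm ε φ g) :=
    contDiff_integral_sub_smul (k := fun x => x * mollR ε φ x) (contDiff_id.mul hk)
      hk_supp.mul_left hg
  exact hF.add (hD.const_smul γ)

lemma conventionalMollification_eq_integral {ε : ℝ} (hε : 0 < ε) (φ : ℝ → ℝ) (f : ℝ → E)
    (t : ℝ) : conventionalMollification ε φ f t = ∫ u, φ u • f (t - ε * u) := by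
  calc ∫ s, mollR ε φ (t - s) • f s
      = ∫ v, mollR ε φ v • f (t - v) := by
        rw [← integral_sub_left_eq_self (fun v => mollR ε φ v • f (t - v)) volume t]
        simp only [sub_sub_cancel]
    _ = ε⁻¹ • ∫ v, φ (v / ε) • f (t - ε * (v / ε)) := by
        simp only [mollR, mul_smul, integral_smul, mul_div_cancel₀ _ hε.ne']
    _ = ∫ u, φ u • f (t - ε * u) := by
        rw [Measure.integral_comp_div (fun u => φ u • f (t - ε * u)), abs_of_pos hε,
          inv_smul_smul₀ hε.ne']

lemma continuous_integral_smul_comp_sub_mul (hφ : Continuous φ) (hφ_supp : HasCompactSupport φ)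
    (hf : Continuous f) :
    Continuous fun p : ℝ × ℝ => ∫ u, φ u • f (p.2 - p.1 * u) := by
  have hrestrict (p : ℝ × ℝ) :
      ∫ u in tsupport φ, φ u • f (p.2 - p.1 * u) = ∫ u, φ u • f (p.2 - p.1 * u) :=
    setIntegral_eq_integral_of_forall_compl_eq_zero fun u hu => by
      rw [image_eq_zero_of_notMem_tsupport hu, zero_smul]
  simp only [← hrestrict]
  exact continuous_parametric_integral_of_continuous (by fun_prop) hφ_supp

lemma tendsto_conventionalMollification [CompleteSpace E] (hφ : Continuous φ)
    (hφ_supp : HasCompactSupport φ) (hφ_int : ∫ x, φ x = 1) (hf : Continuous f) (t₀ : ℝ) :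
    Tendsto (fun p : ℝ × ℝ => conventionalMollification p.1 φ f p.2) (𝓝[>] 0 ×ˢ 𝓝 t₀)
      (𝓝 (f t₀)) := by
  have hlim : Tendsto (fun p : ℝ × ℝ => ∫ u, φ u • f (p.2 - p.1 * u)) (𝓝[>] 0 ×ˢ 𝓝 t₀)
      (𝓝 (f t₀)) := by
    have hcont := (continuous_integral_smul_comp_sub_mul hφ hφ_supp hf).tendsto (0, t₀)
    simp only [zero_mul, sub_zero, integral_smul_const, hφ_int, one_smul, nhds_prod_eq] at hcont
    exact hcont.mono_left (prod_mono_left _ nhdsWithin_le_nhds)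
  refine hlim.congr' ?_
  filter_upwards [tendsto_fst.eventually self_mem_nhdsWithin] with p hp
  exact (conventionalMollification_eq_integral hp φ f p.2).symm

lemma norm_integral_comp_div_smul_le {ψ : ℝ → ℝ} {C R ε : ℝ} (hψ_bound : ∀ x, ‖ψ x‖ ≤ C)
    (hψ_supp : Function.support ψ ⊆ Metric.closedBall 0 R) (hR : 0 ≤ R) (hε : 0 < ε)
    (hg : LocallyIntegrable g) (t : ℝ) :
    ‖∫ s, ψ ((t - s) / ε) • g s‖ ≤ C * ∫ s in (t - R * ε)..(t + R * ε), ‖g s‖ := by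
  let I := Set.Icc (t - R * ε) (t + R * ε)
  have hzero (s : ℝ) (hs : s ∉ I) : ψ ((t - s) / ε) = 0 := by
    refine Function.notMem_support.1 fun hmem => hs ?_
    have hball := hψ_supp hmem
    rwa [mem_closedBall_zero_iff, norm_div, Real.norm_of_nonneg hε.le, div_le_iff₀ hε,
      Real.norm_eq_abs, Set.mem_Icc_iff_abs_le] at hball
  have hle : t - R * ε ≤ t + R * ε := by linarith [mul_nonneg hR hε.le]
  calc ‖∫ s, ψ ((t - s) / ε) • g s‖
      = ‖∫ s in I, ψ ((t - s) / ε) • g s‖ := by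
        rw [setIntegral_eq_integral_of_forall_compl_eq_zero fun s hs => by
          rw [hzero s hs, zero_smul]]
    _ ≤ ∫ s in I, C * ‖g s‖ := by
        refine norm_integral_le_of_norm_le
          ((hg.integrableOn_isCompact isCompact_Icc).norm.const_mul C) (.of_forall fun s => ?_)
        rw [norm_smul]
        gcongr
        exact hψ_bound _
    _ = C * ∫ s in (t - R * ε)..(t + R * ε), ‖g s‖ := by
        rw [integral_const_mul, intervalIntegral.integral_of_le hle, integral_Icc_eq_integral_Ioc]

lemma exists_norm_directionalTerm_le (hφ : Continuous φ) (hφ_supp : HasCompactSupport φ)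
    (hg : LocallyIntegrable g) :
    ∃ C R : ℝ, ∀ ε > 0, ∀ t,
      ‖directionalTerm ε φ g t‖ ≤ C * ∫ s in (t - R * ε)..(t + R * ε), ‖g s‖ := by
  have hψ_supp : HasCompactSupport fun x => x * φ x := hφ_supp.mul_left
  obtain ⟨C, hC⟩ := hψ_supp.exists_bound_of_continuous (by fun_prop)
  obtain ⟨R, hR, hball⟩ := hψ_supp.isCompact.isBounded.subset_closedBall_lt 0 0
  refine ⟨C, R, fun ε hε t => ?_⟩
  have hkernel (x : ℝ) : x * mollR ε φ x = x / ε * φ (x / ε) := by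
    rw [mollR]; ring
  simp only [directionalTerm, hkernel]
  exact norm_integral_comp_div_smul_le hC ((subset_tsupport _).trans hball) hR.le hε hg t

lemma continuous_intervalIntegral_sub_add (hg : ∀ a b, IntervalIntegrable g volume a b) (R : ℝ) :
    Continuous fun p : ℝ × ℝ => ∫ s in (p.2 - R * p.1)..(p.2 + R * p.1), g s := by
  have hprim : Continuous fun b => ∫ s in (0 : ℝ)..b, g s :=
    intervalIntegral.continuous_primitive hg 0
  have hdiff : Continuous fun p : ℝ × ℝ =>
      (∫ s in (0 : ℝ)..(p.2 + R * p.1), g s) - ∫ s in (0 : ℝ)..(p.2 - R * p.1), g s :=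
    (hprim.comp (by fun_prop)).sub (hprim.comp (by fun_prop))
  exact hdiff.congr fun p => intervalIntegral.integral_interval_sub_left (hg 0 _) (hg 0 _)

lemma tendsto_directionalTerm (hφ : Continuous φ) (hφ_supp : HasCompactSupport φ)
    (hg : LocallyIntegrable g) (t₀ : ℝ) :
    Tendsto (fun p : ℝ × ℝ => directionalTerm p.1 φ g p.2) (𝓝[>] 0 ×ˢ 𝓝 t₀) (𝓝 0) := by
  obtain ⟨C, R, hCR⟩ := exists_norm_directionalTerm_le hφ hφ_supp hg
  have hg_norm (a b : ℝ) : IntervalIntegrable (fun s => ‖g s‖) volume a b :=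
    (hg.integrableOn_isCompact isCompact_uIcc).intervalIntegrable.norm
  have hbound : Tendsto (fun p : ℝ × ℝ => C * ∫ s in (p.2 - R * p.1)..(p.2 + R * p.1), ‖g s‖)
      (𝓝[>] 0 ×ˢ 𝓝 t₀) (𝓝 0) := by
    have hcont := ((continuous_intervalIntegral_sub_add hg_norm R).const_mul C).tendsto (0, t₀)
    simp only [mul_zero, sub_zero, add_zero, intervalIntegral.integral_same,
      nhds_prod_eq] at hcont
    exact hcont.mono_left (prod_mono_left _ nhdsWithin_le_nhds)
  refine squeeze_zero_norm' ?_ hbound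
  filter_upwards [tendsto_fst.eventually self_mem_nhdsWithin] with p hp using hCR p.1 hp p.2

lemma tendstoLocallyUniformly_combinedMollification [CompleteSpace E] (hφ : Continuous φ)
    (hφ_supp : HasCompactSupport φ) (hφ_int : ∫ x, φ x = 1) (hf : Continuous f)
    (hg : LocallyIntegrable g) (γ : ℝ) :
    TendstoLocallyUniformly (fun ε => combinedMollification ε γ φ f g) f (𝓝[>] 0) := by
  rw [tendstoLocallyUniformly_iff_forall_tendsto]
  intro t₀
  have hf_lim : Tendsto (fun p : ℝ × ℝ => f p.2) (𝓝[>] 0 ×ˢ 𝓝 t₀) (𝓝 (f t₀)) :=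
    (hf.tendsto t₀).comp tendsto_snd
  have hG_lim : Tendsto (fun p : ℝ × ℝ => combinedMollification p.1 γ φ f g p.2)
      (𝓝[>] 0 ×ˢ 𝓝 t₀) (𝓝 (f t₀)) := by
    simpa only [combinedMollification, smul_zero, add_zero] using
      (tendsto_conventionalMollification hφ hφ_supp hφ_int hf t₀).add
        ((tendsto_directionalTerm hφ hφ_supp hg t₀).const_smul γ)
  exact (hf_lim.prodMk_nhds hG_lim).mono_right (nhds_le_uniformity _)

theorem stmt16_general [CompleteSpace E] (f Df : ℝ → E) (hf : Continuous f)
    (_hDf : ∀ᵐ x ∂(volume : Measure ℝ), HasDerivAt f (Df x) x)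
    (hDf_loc : LocallyIntegrable Df volume) (φ : ℝ → ℝ) (hφ_smooth : ContDiff ℝ (⊤ : ℕ∞) φ)
    (hφ_supp : HasCompactSupport φ) (hφ_int : ∫ x, φ x = 1) :
    (∀ γ : ℝ, ∀ ε : ℝ, 0 < ε → ContDiff ℝ (⊤ : ℕ∞) (combinedMollification ε γ φ f Df))
    ∧ (∀ γ : ℝ, ∀ t : ℝ,
        Tendsto (fun ε : ℝ => combinedMollification ε γ φ f Df t) (𝓝[>] 0) (𝓝 (f t)))
    ∧ (∀ γ : ℝ, ∀ K : Set ℝ, IsCompact K →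
        TendstoUniformlyOn (fun ε : ℝ => combinedMollification ε γ φ f Df) f (𝓝[>] 0) K) := by
  have hlim := tendstoLocallyUniformly_combinedMollification hφ_smooth.continuous hφ_supp hφ_int
    hf hDf_loc
  refine ⟨fun γ ε hε => ?_, fun γ t => ?_, fun γ K hK => ?_⟩
  · exact contDiff_combinedMollification hφ_smooth hφ_supp hf.locallyIntegrable hDf_loc hε.ne' γ
  · exact (hlim γ).tendstoLocallyUniformlyOn.tendsto_at (Set.mem_univ t)
  · exact (tendstoLocallyUniformlyOn_iff_tendstoUniformlyOn_of_compact hK).1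
      (hlim γ).tendstoLocallyUniformlyOn

end CombinedMollification

theorem stmt16 (n : ℕ) (f : ℝ → Euc n) (L : NNReal)
    -- `f` is Lipschitz
    (hf : LipschitzWith L f)
    -- `f` is differentiable a.e. with locally integrable derivative `Df`
    (Df : ℝ → Euc n)
    (hDf : ∀ᵐ x ∂(volume : Measure ℝ), HasDerivAt f (Df x) x)
    (hDf_loc : LocallyIntegrable Df volume)
    -- `φ` is a nonnegative mollifier on `ℝ` with support `[-1,1]`
    (φ : ℝ → ℝ) (hφ_smooth : ContDiff ℝ (⊤ : ℕ∞) φ)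
    (hφ_int : ∫ x, φ x = 1) (hφ_nonneg : ∀ x, 0 ≤ φ x)
    (hφ_supp : tsupport φ = Set.Icc (-1 : ℝ) 1) :
    -- `G_ε^γ` is `C^∞` ...
    (∀ γ : ℝ, ∀ ε : ℝ, 0 < ε → ContDiff ℝ (⊤ : ℕ∞) (Gcomb ε γ φ f Df))
    -- ... converges pointwise to `f` as `ε → 0⁺` ...
    ∧ (∀ γ : ℝ, ∀ t : ℝ,
        Tendsto (fun ε : ℝ => Gcomb ε γ φ f Df t) (𝓝[>] 0) (𝓝 (f t)))
    -- ... and uniformly on compact subsets of `ℝ`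
    ∧ (∀ γ : ℝ, ∀ K : Set ℝ, IsCompact K →
        TendstoUniformlyOn (fun (ε : ℝ) (t : ℝ) => Gcomb ε γ φ f Df t) f
          (𝓝[>] 0) K) :=
  stmt16_general f Df hf.continuous hDf hDf_loc φ hφ_smooth
    (hφ_supp.symm ▸ isCompact_Icc : IsCompact (tsupport φ)) hφ_int
end
end
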